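/- Fix any r ∈ (0, 1) and any matrix X₀ ∈ ℝ^{n×p}. Over the set Γ ∩ {w : ‖w‖ ≥ r}, the function w ↦ wᵀ∇²g(w; X₀)w/‖w‖² is L-Lipschitz with L ≤ (16 n³/μ²)‖X₀‖_∞³ + (8 n^{3/2}/(μ r))‖X₀‖_∞² + (48 n^{5/2}/μ)‖X₀‖_∞² + 96 n^{5/2} ‖X₀‖_∞. -/

import Mathlib

open MeasureTheory ProbabilityTheory Real Matrix
open scoped RealInnerProductSpace ENNReal NNReal

noncomputable section

/-- The Bernoulli–Gaussian law `BG(θ)`: with probability `θ` a standard Gaussian,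
with probability `1-θ` a point mass at `0`. -/
def bg (θ : ℝ) : Measure ℝ :=
  θ.toNNReal • gaussianReal 0 1 + (1 - θ).toNNReal • Measure.dirac 0

instance bg.instIsFiniteMeasure (θ : ℝ) : IsFiniteMeasure (bg θ) := by
  unfold bg; infer_instance

/-- Law of an `n × p` matrix with i.i.d. `BG(θ)` entries. -/
def bgMatrix (θ : ℝ) (n p : ℕ) : Measure (Fin n → Fin p → ℝ) :=
  Measure.pi fun _ => Measure.pi fun _ => bg θ

/-- Law of a vector in `ℝ^n` with i.i.d. `BG(θ)` entries. -/
def bgVec (θ : ℝ) (n : ℕ) : Measure (Fin n → ℝ) :=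
  Measure.pi fun _ => bg θ

/-- The smooth sparsity surrogate `h_μ(z) = μ log cosh (z/μ)`. -/
def hmu (μ z : ℝ) : ℝ := μ * Real.log (Real.cosh (z / μ))

/-- Reparametrization `q(w) = (w, √(1-‖w‖²))` with `w` in the unit ball of `ℝ^{n-1}`. -/
def qmap (n : ℕ) (w : EuclideanSpace ℝ (Fin (n - 1))) : Fin n → ℝ :=
  fun i => if h : (i : ℕ) < n - 1 then w ⟨i, h⟩ else Real.sqrt (1 - ‖w‖ ^ 2)

/-- `f(q; Y) = (1/p) ∑ₖ h_μ(qᵀ yₖ)`. -/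
def ffun (n p : ℕ) (μ : ℝ) (Y : Matrix (Fin n) (Fin p) ℝ)
    (q : EuclideanSpace ℝ (Fin n)) : ℝ :=
  (p : ℝ)⁻¹ * ∑ k : Fin p, hmu μ (∑ i : Fin n, q i * Y i k)

/-- `g(w; Y) = f(q(w); Y)`. -/
def gfun (n p : ℕ) (μ : ℝ) (Y : Matrix (Fin n) (Fin p) ℝ)
    (w : EuclideanSpace ℝ (Fin (n - 1))) : ℝ :=
  (p : ℝ)⁻¹ * ∑ k : Fin p, hmu μ (∑ i : Fin n, qmap n w i * Y i k)

/-- Gradient `∇g(w; Y)` in `w`. -/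
def gradg (n p : ℕ) (μ : ℝ) (Y : Matrix (Fin n) (Fin p) ℝ)
    (w : EuclideanSpace ℝ (Fin (n - 1))) : EuclideanSpace ℝ (Fin (n - 1)) :=
  gradient (gfun n p μ Y) w

/-- Hessian `∇²g(w; Y)` in `w`, as a continuous linear map. -/
def hessg (n p : ℕ) (μ : ℝ) (Y : Matrix (Fin n) (Fin p) ℝ)
    (w : EuclideanSpace ℝ (Fin (n - 1))) :
    EuclideanSpace ℝ (Fin (n - 1)) →L[ℝ] EuclideanSpace ℝ (Fin (n - 1)) :=
  fderiv ℝ (gradg n p μ Y) w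

/-- The set `Γ = {w : ‖w‖ < √((4n-1)/(4n))}`. -/
def GammaSet (n : ℕ) : Set (EuclideanSpace ℝ (Fin (n - 1))) :=
  {w | ‖w‖ < Real.sqrt ((4 * (n : ℝ) - 1) / (4 * n))}

/-- Spectral (`ℓ²→ℓ²` operator) norm of а matrix. -/
def specNorm {m k : ℕ} (M : Matrix (Fin m) (Fin k) ℝ) : ℝ :=
  ‖LinearMap.toContinuousLinearMap (Matrix.toEuclideanLin M)‖

/-- Largest magnitude of an entry of a matrix. -/
def Minf {m k : ℕ} (M : Matrix (Fin m) (Fin k) ℝ) : ℝ := ⨆ i, ⨆ j, |M i j|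

/-- Condition number: ratio of largest to smallest singular value. -/
def kappa {n : ℕ} (s : Fin n → ℝ) : ℝ := (⨆ i, s i) / (⨅ i, s i)

/-- Signed standard basis vectors `{± e_i}` of `ℝ^n`. -/
def SignedBasis (n : ℕ) : Set (EuclideanSpace ℝ (Fin n)) :=
  {b | ∃ i : Fin n, b = EuclideanSpace.single i (1 : ℝ) ∨ b = -EuclideanSpace.single i (1 : ℝ)}

/-- Set of local minimizers of `f(·; Y)` over the unit sphere `S^{n-1}`. -/
def LocalMins (n p : ℕ) (μ : ℝ) (Y : Matrix (Fin n) (Fin p) ℝ) :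
    Set (EuclideanSpace ℝ (Fin n)) :=
  {q | q ∈ Metric.sphere (0 : EuclideanSpace ℝ (Fin n)) 1 ∧
       IsLocalMinOn (ffun n p μ Y) (Metric.sphere (0 : EuclideanSpace ℝ (Fin n)) 1) q}

/-- Expected objective `E_x[h_μ(q(w)ᵀ x)]` for `x` with i.i.d. `BG(θ)` entries. -/
def Gexp (n : ℕ) (θ μ : ℝ) (w : EuclideanSpace ℝ (Fin (n - 1))) : ℝ :=
  ∫ x, hmu μ (∑ i : Fin n, qmap n w i * x i) ∂(bgVec θ n)

/-!
Since `q(w)` is the point of the unit hemisphere above `w`, the quotient `wᵀ ∇²g(w) w / ‖w‖²` is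
the second derivative of `g` along the unit-speed ray through `w`. With `v` and `a` the velocity
and the acceleration of the lift `q` of that ray, a column `y` contributes
`h_μ''(⟪q, y⟫) ⟪v, y⟫² + h_μ'(⟪q, y⟫) ⟪a, y⟫`. On `Γ` the height `√(1 - ‖w‖²)` of `q(w)` is at least
`1 / (2√n)`, so by Cauchy–Schwarz every factor is bounded and Lipschitz; only the direction
`w / ‖w‖` in `v` has a Lipschitz constant, `2 / r`, that blows up at the origin. The product rule
combines these estimates for each column, and averaging over the columns preserves them.
-/

lemma abs_mul_sub_mul_le (a b a' b' : ℝ) :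
    |a * b - a' * b'| ≤ |a - a'| * |b| + |a'| * |b - b'| := by
  calc |a * b - a' * b'| = |(a - a') * b + a' * (b - b')| := by ring_nf
    _ ≤ |a - a'| * |b| + |a'| * |b - b'| := by
        simpa only [abs_mul] using abs_add_le ((a - a') * b) (a' * (b - b'))

lemma abs_inv_card_mul_sum_le {ι : Type*} (s : Finset ι) {f : ι → ℝ} {M : ℝ} (hM : 0 ≤ M)
    (hf : ∀ i ∈ s, |f i| ≤ M) : |(s.card : ℝ)⁻¹ * ∑ i ∈ s, f i| ≤ M := by
  calc |(s.card : ℝ)⁻¹ * ∑ i ∈ s, f i| = (s.card : ℝ)⁻¹ * |∑ i ∈ s, f i| := by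
        rw [abs_mul, abs_of_nonneg (by positivity)]
    _ ≤ (s.card : ℝ)⁻¹ * (s.card * M) := by
        gcongr
        simpa only [nsmul_eq_mul] using
          (Finset.abs_sum_le_sum_abs f s).trans (Finset.sum_le_card_nsmul s _ M hf)
    _ ≤ M := by
        rw [← mul_assoc]
        exact mul_le_of_le_one_left hM inv_mul_le_one

lemma norm_normalize_le_one {V : Type*} [NormedAddCommGroup V] [NormedSpace ℝ V] (x : V) :
    ‖NormedSpace.normalize x‖ ≤ 1 := by
  rw [NormedSpace.normalize, norm_smul, norm_inv, norm_norm]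
  exact inv_mul_le_one

lemma norm_mul_norm_normalize_sub_normalize_le {V : Type*} [NormedAddCommGroup V]
    [NormedSpace ℝ V] (x y : V) :
    ‖x‖ * ‖NormedSpace.normalize x - NormedSpace.normalize y‖ ≤ 2 * ‖x - y‖ := by
  have decomposition : ‖x‖ • (NormedSpace.normalize x - NormedSpace.normalize y) =
      (x - y) + (‖y‖ - ‖x‖) • NormedSpace.normalize y := by
    rw [smul_sub, sub_smul, NormedSpace.norm_smul_normalize, NormedSpace.norm_smul_normalize]
    abel
  calc ‖x‖ * ‖NormedSpace.normalize x - NormedSpace.normalize y‖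
      = ‖(x - y) + (‖y‖ - ‖x‖) • NormedSpace.normalize y‖ := by
        rw [← decomposition, norm_smul, norm_norm]
    _ ≤ ‖x - y‖ + |‖y‖ - ‖x‖| * ‖NormedSpace.normalize y‖ := by
        simpa only [norm_smul, Real.norm_eq_abs] using
          norm_add_le (x - y) ((‖y‖ - ‖x‖) • NormedSpace.normalize y)
    _ ≤ ‖x - y‖ + ‖x - y‖ * 1 := by
        gcongr
        · rw [norm_sub_rev]
          exact abs_norm_sub_norm_le y x
        · exact norm_normalize_le_one y
    _ = 2 * ‖x - y‖ := by ring

/-! ### The loss `h_μ` -/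

/-- Quantitative regularity of a loss `h`: it is `C²` with `|h'| ≤ A₁`, `|h''| ≤ A₂` and `h''`
is `A₃`-Lipschitz. Only these properties of `h_μ` enter the Lipschitz estimate. -/
structure IsRegularLoss (h : ℝ → ℝ) (A₁ A₂ A₃ : ℝ) : Prop where
  contDiff : ContDiff ℝ 2 h
  abs_deriv_le : ∀ z, |deriv h z| ≤ A₁
  abs_deriv_deriv_le : ∀ z, |deriv (deriv h) z| ≤ A₂
  abs_deriv_deriv_sub_le : ∀ z z', |deriv (deriv h) z - deriv (deriv h) z'| ≤ A₃ * |z - z'|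

lemma IsRegularLoss.abs_deriv_sub_le {h : ℝ → ℝ} {A₁ A₂ A₃ : ℝ} (hh : IsRegularLoss h A₁ A₂ A₃)
    (z z' : ℝ) : |deriv h z - deriv h z'| ≤ A₂ * |z - z'| :=
  convex_univ.norm_image_sub_le_of_norm_deriv_le
    (fun x _ => hh.contDiff.differentiable_deriv_two x) (fun x _ => hh.abs_deriv_deriv_le x)
    (Set.mem_univ z') (Set.mem_univ z)

lemma hasDerivAt_tanh (x : ℝ) : HasDerivAt Real.tanh (1 - Real.tanh x ^ 2) x := by
  have hcosh : Real.cosh x ≠ 0 := (Real.cosh_pos x).ne'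
  have hquot := (Real.hasDerivAt_sinh x).fun_div (Real.hasDerivAt_cosh x) hcosh
  simp only [← Real.tanh_eq_sinh_div_cosh] at hquot
  refine hquot.congr_deriv ?_
  rw [Real.tanh_eq_sinh_div_cosh]
  field_simp

lemma abs_one_sub_tanh_sq_le_one (x : ℝ) : |1 - Real.tanh x ^ 2| ≤ 1 := by
  rw [abs_of_nonneg (by linarith [Real.tanh_sq_lt_one x])]
  linarith [sq_nonneg (Real.tanh x)]

lemma abs_tanh_sub_tanh_le (x y : ℝ) : |Real.tanh x - Real.tanh y| ≤ |x - y| := by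
  simpa only [Real.norm_eq_abs, one_mul] using
    convex_univ.norm_image_sub_le_of_norm_hasDerivWithin_le
      (fun x _ => (hasDerivAt_tanh x).hasDerivWithinAt)
      (fun x _ => abs_one_sub_tanh_sq_le_one x) (Set.mem_univ y) (Set.mem_univ x)

lemma abs_tanh_sq_sub_tanh_sq_le (x y : ℝ) :
    |Real.tanh x ^ 2 - Real.tanh y ^ 2| ≤ 2 * |x - y| := by
  calc |Real.tanh x ^ 2 - Real.tanh y ^ 2|
      = |Real.tanh x + Real.tanh y| * |Real.tanh x - Real.tanh y| := by
        rw [sq_sub_sq, abs_mul]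
    _ ≤ (1 + 1) * |x - y| := by
        apply mul_le_mul ?_ ?_ (abs_nonneg _) (by norm_num)
        exacts [(abs_add_le _ _).trans
          (add_le_add (Real.abs_tanh_lt_one x).le (Real.abs_tanh_lt_one y).le),
          abs_tanh_sub_tanh_le x y]
    _ = 2 * |x - y| := by ring

lemma contDiff_hmu (μ : ℝ) : ContDiff ℝ 2 (hmu μ) :=
  contDiff_const.mul ((Real.contDiff_cosh.comp (contDiff_id.div_const μ)).log
    fun _ => (Real.cosh_pos _).ne')

lemma deriv_hmu {μ : ℝ} (hμ : μ ≠ 0) : deriv (hmu μ) = fun z => Real.tanh (z / μ) := by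
  ext z
  have hderiv := ((((hasDerivAt_id z).div_const μ).cosh).log (Real.cosh_pos _).ne').const_mul μ
  refine (HasDerivAt.congr_deriv (f := hmu μ) hderiv ?_).deriv
  rw [Real.tanh_eq_sinh_div_cosh]
  simp only [id_eq]
  field_simp

lemma deriv_deriv_hmu {μ : ℝ} (hμ : μ ≠ 0) :
    deriv (deriv (hmu μ)) = fun z => (1 - Real.tanh (z / μ) ^ 2) / μ := by
  rw [deriv_hmu hμ]
  ext z
  have hderiv := (hasDerivAt_tanh (z / μ)).comp z ((hasDerivAt_id' z).div_const μ)
  exact (hderiv.congr_deriv (mul_one_div _ _)).deriv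

lemma isRegularLoss_hmu {μ : ℝ} (hμ : 0 < μ) : IsRegularLoss (hmu μ) 1 (1 / μ) (2 / μ ^ 2) where
  contDiff := contDiff_hmu μ
  abs_deriv_le z := by
    rw [deriv_hmu hμ.ne']
    exact (Real.abs_tanh_lt_one _).le
  abs_deriv_deriv_le z := by
    simp only [deriv_deriv_hmu hμ.ne', abs_div, abs_of_pos hμ]
    gcongr
    exact abs_one_sub_tanh_sq_le_one _
  abs_deriv_deriv_sub_le z z' := by
    simp only [deriv_deriv_hmu hμ.ne']
    calc |(1 - Real.tanh (z / μ) ^ 2) / μ - (1 - Real.tanh (z' / μ) ^ 2) / μ|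
        = |Real.tanh (z / μ) ^ 2 - Real.tanh (z' / μ) ^ 2| / μ := by
          rw [← sub_div, abs_div, abs_of_pos hμ, sub_sub_sub_cancel_left, abs_sub_comm]
      _ ≤ 2 * |z / μ - z' / μ| / μ := by
          gcongr
          exact abs_tanh_sq_sub_tanh_sq_le _ _
      _ = 2 / μ ^ 2 * |z - z'| := by
          rw [← sub_div, abs_div, abs_of_pos hμ]
          field_simp

/-! ### The profile `t ↦ √(1 - t²)` -/

lemma convex_setOf_le_sqrt_one_sub_sq {c : ℝ} (hc : 0 < c) :
    Convex ℝ {t : ℝ | c ≤ √(1 - t ^ 2)} := by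
  have hset : {t : ℝ | c ≤ √(1 - t ^ 2)} = {t ∈ Set.univ | t ^ 2 ≤ 1 - c ^ 2} := by
    ext t
    simp only [Set.mem_ofPred_eq, Set.mem_univ, true_and, Real.le_sqrt' hc, le_sub_comm]
  rw [hset]
  exact even_two.convexOn_pow.convex_le (1 - c ^ 2)

lemma hasDerivAt_sqrt_one_sub_sq {t : ℝ} (ht : 0 < √(1 - t ^ 2)) :
    HasDerivAt (fun t : ℝ => √(1 - t ^ 2)) (-(t / √(1 - t ^ 2))) t := by
  refine (((hasDerivAt_pow 2 t).const_sub 1).sqrt (Real.sqrt_pos.1 ht).ne').congr_deriv ?_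
  norm_num
  ring

lemma hasDerivAt_div_sqrt_one_sub_sq {t : ℝ} (ht : 0 < √(1 - t ^ 2)) :
    HasDerivAt (fun t : ℝ => t / √(1 - t ^ 2)) (1 / √(1 - t ^ 2) ^ 3) t := by
  refine ((hasDerivAt_id' t).fun_div (hasDerivAt_sqrt_one_sub_sq ht) ht.ne').congr_deriv ?_
  have hsq := Real.sq_sqrt (Real.sqrt_pos.1 ht).le
  field_simp
  linarith

lemma hasDerivAt_one_div_sqrt_one_sub_sq_cube {t : ℝ} (ht : 0 < √(1 - t ^ 2)) :
    HasDerivAt (fun t : ℝ => 1 / √(1 - t ^ 2) ^ 3) (3 * t / √(1 - t ^ 2) ^ 5) t := by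
  refine ((hasDerivAt_const t (1 : ℝ)).fun_div ((hasDerivAt_sqrt_one_sub_sq ht).fun_pow 3)
    (pow_ne_zero 3 ht.ne')).congr_deriv ?_
  field_simp
  ring

lemma abs_le_one_of_sqrt_one_sub_sq_pos {t : ℝ} (ht : 0 < √(1 - t ^ 2)) : |t| ≤ 1 := by
  rw [← sq_le_one_iff_abs_le_one]
  linarith [Real.sqrt_pos.1 ht]

lemma abs_div_sqrt_one_sub_sq_sub_le {c t t' : ℝ} (hc : 0 < c) (ht : c ≤ √(1 - t ^ 2))
    (ht' : c ≤ √(1 - t' ^ 2)) :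
    |t / √(1 - t ^ 2) - t' / √(1 - t' ^ 2)| ≤ 1 / c ^ 3 * |t - t'| := by
  refine (convex_setOf_le_sqrt_one_sub_sq hc).norm_image_sub_le_of_norm_hasDerivWithin_le
    (f := fun t : ℝ => t / √(1 - t ^ 2))
    (fun x hx => (hasDerivAt_div_sqrt_one_sub_sq (hc.trans_le hx)).hasDerivWithinAt)
    (fun x hx => ?_) ht' ht
  rw [Real.norm_eq_abs, abs_of_nonneg (by positivity)]
  gcongr
  exact hx

lemma abs_one_div_sqrt_one_sub_sq_cube_sub_le {c t t' : ℝ} (hc : 0 < c)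
    (ht : c ≤ √(1 - t ^ 2)) (ht' : c ≤ √(1 - t' ^ 2)) :
    |1 / √(1 - t ^ 2) ^ 3 - 1 / √(1 - t' ^ 2) ^ 3| ≤ 3 / c ^ 5 * |t - t'| := by
  refine (convex_setOf_le_sqrt_one_sub_sq hc).norm_image_sub_le_of_norm_hasDerivWithin_le
    (f := fun t : ℝ => 1 / √(1 - t ^ 2) ^ 3)
    (fun x hx => (hasDerivAt_one_div_sqrt_one_sub_sq_cube (hc.trans_le hx)).hasDerivWithinAt)
    (fun x hx => ?_) ht' ht
  have hx1 := abs_le_one_of_sqrt_one_sub_sq_pos (hc.trans_le hx)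
  rw [norm_div, norm_mul, norm_pow, Real.norm_ofNat, Real.norm_of_nonneg (Real.sqrt_nonneg _)]
  calc 3 * ‖x‖ / √(1 - x ^ 2) ^ 5 ≤ 3 * 1 / c ^ 5 := by
        gcongr
        · exact hx1
        · exact hx
    _ = 3 / c ^ 5 := by rw [mul_one]

section Hemisphere

variable {E : Type*} [NormedAddCommGroup E] [InnerProductSpace ℝ E]

/-! ### Second derivatives along rays of the hemisphere chart -/

/-- The point of the upper unit hemisphere of `E × ℝ` above `w`, for `w` in the unit ball of `E`;
this is the paper's `q(w)`, given in coordinates by `qmap`. -/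
def hemisphereLift (w : E) : WithLp 2 (E × ℝ) :=
  WithLp.toLp 2 (w, √(1 - ‖w‖ ^ 2))

/-- The velocity, at the point above `w`, of the lift of the unit-speed ray from the origin
through `w`. -/
def radialVelocity (w : E) : WithLp 2 (E × ℝ) :=
  WithLp.toLp 2 (NormedSpace.normalize w, -(‖w‖ / √(1 - ‖w‖ ^ 2)))

/-- The acceleration, at the point above `w`, of the lift of the unit-speed ray from the origin
through `w`. -/
def radialAcceleration (w : E) : WithLp 2 (E × ℝ) :=
  WithLp.toLp 2 (0, -(1 / √(1 - ‖w‖ ^ 2) ^ 3))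

/-- The second derivative of `w ↦ h ⟪q(w), y⟫` in the radial direction `w / ‖w‖`. -/
def radialSecondDeriv (h : ℝ → ℝ) (y : WithLp 2 (E × ℝ)) (w : E) : ℝ :=
  deriv (deriv h) ⟪hemisphereLift w, y⟫ * ⟪radialVelocity w, y⟫ ^ 2 +
    deriv h ⟪hemisphereLift w, y⟫ * ⟪radialAcceleration w, y⟫

/-- The Rayleigh quotient `wᵀ ∇²f(w) w / ‖w‖²` of the Hessian in the radial direction. -/
def radialHessian [CompleteSpace E] (f : E → ℝ) (w : E) : ℝ :=
  ⟪fderiv ℝ (gradient f) w w, w⟫ / ‖w‖ ^ 2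

lemma hasDerivAt_toLp_prodMk {u : ℝ → E} {a : ℝ → ℝ} {u' : E} {a' t : ℝ}
    (hu : HasDerivAt u u' t) (ha : HasDerivAt a a' t) :
    HasDerivAt (fun s => WithLp.toLp 2 (u s, a s)) (WithLp.toLp 2 (u', a')) t :=
  (WithLp.prodContinuousLinearEquiv 2 ℝ E ℝ).symm.hasFDerivAt.comp_hasDerivAt t (hu.prodMk ha)

lemma hasDerivAt_hemisphereLift_smul {e : E} (he : ‖e‖ = 1) {t : ℝ} (ht : t ∈ Set.Ioo 0 1) :
    HasDerivAt (fun s : ℝ => hemisphereLift (s • e)) (radialVelocity (t • e)) t := by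
  have hsqrt : 0 < √(1 - t ^ 2) := Real.sqrt_pos.2 (by nlinarith [ht.1, ht.2])
  have hray : HasDerivAt (fun s : ℝ => s • e) e t := by
    simpa only [one_smul] using (hasDerivAt_id' t).smul_const e
  simpa only [hemisphereLift, radialVelocity, norm_smul, he, mul_one, Real.norm_eq_abs, sq_abs,
    abs_of_pos ht.1, NormedSpace.normalize_smul_of_pos ht.1,
    NormedSpace.normalize_eq_self_of_norm_eq_one he]
    using hasDerivAt_toLp_prodMk hray (hasDerivAt_sqrt_one_sub_sq hsqrt)

lemma hasDerivAt_radialVelocity_smul {e : E} (he : ‖e‖ = 1) {t : ℝ} (ht : t ∈ Set.Ioo 0 1) :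
    HasDerivAt (fun s : ℝ => radialVelocity (s • e)) (radialAcceleration (t • e)) t := by
  have hsqrt : 0 < √(1 - t ^ 2) := Real.sqrt_pos.2 (by nlinarith [ht.1, ht.2])
  have hvelocity : (fun s : ℝ => radialVelocity (s • e)) =ᶠ[nhds t]
      fun s => WithLp.toLp 2 (e, -(s / √(1 - s ^ 2))) := by
    filter_upwards [lt_mem_nhds ht.1] with s hs
    simp only [radialVelocity, norm_smul, he, mul_one, Real.norm_eq_abs, abs_of_pos hs,
      NormedSpace.normalize_smul_of_pos hs, NormedSpace.normalize_eq_self_of_norm_eq_one he]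
  simpa only [radialAcceleration, norm_smul, he, mul_one, Real.norm_eq_abs, sq_abs]
    using (hasDerivAt_toLp_prodMk (hasDerivAt_const t e)
      (hasDerivAt_div_sqrt_one_sub_sq hsqrt).neg).congr_of_eventuallyEq hvelocity

lemma hasDerivAt_comp_hemisphereLift_smul {h : ℝ → ℝ} (hh : Differentiable ℝ h)
    (y : WithLp 2 (E × ℝ)) {e : E} (he : ‖e‖ = 1) {t : ℝ} (ht : t ∈ Set.Ioo 0 1) :
    HasDerivAt (fun s : ℝ => h ⟪hemisphereLift (s • e), y⟫)
      (deriv h ⟪hemisphereLift (t • e), y⟫ * ⟪radialVelocity (t • e), y⟫) t := by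
  have hlift := (hasDerivAt_hemisphereLift_smul he ht).inner ℝ (hasDerivAt_const t y)
  rw [inner_zero_right, zero_add] at hlift
  exact (hh _).hasDerivAt.comp t hlift

lemma hasDerivAt_deriv_comp_hemisphereLift_smul {h : ℝ → ℝ} (hh : Differentiable ℝ (deriv h))
    (y : WithLp 2 (E × ℝ)) {e : E} (he : ‖e‖ = 1) {t : ℝ} (ht : t ∈ Set.Ioo 0 1) :
    HasDerivAt
      (fun s : ℝ => deriv h ⟪hemisphereLift (s • e), y⟫ * ⟪radialVelocity (s • e), y⟫)
      (radialSecondDeriv h y (t • e)) t := by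
  have hvelocity := (hasDerivAt_radialVelocity_smul he ht).inner ℝ (hasDerivAt_const t y)
  rw [inner_zero_right, zero_add] at hvelocity
  refine ((hasDerivAt_comp_hemisphereLift_smul hh y he ht).mul hvelocity).congr_deriv ?_
  rw [radialSecondDeriv, sq, mul_assoc]

lemma contDiffAt_hemisphereLift {w : E} (hw : ‖w‖ < 1) : ContDiffAt ℝ 2 hemisphereLift w := by
  have hpos : 1 - ‖w‖ ^ 2 ≠ 0 := by nlinarith [norm_nonneg w]
  exact (WithLp.contDiff_toLp (p := 2)).contDiffAt.comp w (contDiffAt_id.prodMk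
    ((contDiffAt_const.sub (contDiff_norm_sq ℝ).contDiffAt).sqrt hpos))

lemma deriv_deriv_line_eq_inner_fderiv_gradient [CompleteSpace E] {f : E → ℝ} {x v : E} {t : ℝ}
    (hf : ContDiffAt ℝ 2 f (x + t • v)) :
    deriv (deriv fun s : ℝ => f (x + s • v)) t =
      ⟪fderiv ℝ (gradient f) (x + t • v) v, v⟫ := by
  have hline (s : ℝ) : HasDerivAt (fun s : ℝ => x + s • v) v s := by
    simpa only [one_smul] using ((hasDerivAt_id' s).smul_const v).const_add x
  have hderiv : deriv (fun s : ℝ => f (x + s • v)) =ᶠ[nhds t]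
      fun s => ⟪gradient f (x + s • v), v⟫ := by
    filter_upwards [(hline t).continuousAt.eventually (hf.eventually (by simp))] with s hs
    rw [inner_gradient_left]
    exact ((hs.differentiableAt two_ne_zero).hasFDerivAt.comp_hasDerivAt s (hline s)).deriv
  have hgradient : DifferentiableAt ℝ (gradient f) (x + t • v) :=
    (InnerProductSpace.toDual ℝ E).symm.toContinuousLinearEquiv.differentiableAt.comp _
      ((hf.fderiv_right (m := 1) (by norm_num)).differentiableAt one_ne_zero)
  have hsecond := (hgradient.hasFDerivAt.comp_hasDerivAt t (hline t)).inner ℝ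
    (hasDerivAt_const t v)
  rw [inner_zero_right, zero_add] at hsecond
  exact hderiv.deriv_eq.trans hsecond.deriv

lemma radialHessian_smul_eq_deriv_deriv [CompleteSpace E] {f : E → ℝ} {e : E} (he : ‖e‖ = 1)
    {t : ℝ} (ht : t ≠ 0) (hf : ContDiffAt ℝ 2 f (t • e)) :
    radialHessian f (t • e) = deriv (deriv fun s : ℝ => f (s • e)) t := by
  have hsecond := deriv_deriv_line_eq_inner_fderiv_gradient (x := 0) (v := e)
    (by rwa [zero_add] : ContDiffAt ℝ 2 f (0 + t • e))
  simp only [zero_add] at hsecond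
  rw [hsecond, radialHessian, map_smul, real_inner_smul_left, real_inner_smul_right, norm_smul, he,
    mul_one, Real.norm_eq_abs, sq_abs]
  field_simp

lemma radialHessian_mul_sum_comp_hemisphereLift [CompleteSpace E] {h : ℝ → ℝ}
    (hh : ContDiff ℝ 2 h) {ι : Type*} (s : Finset ι) (a : ℝ) (y : ι → WithLp 2 (E × ℝ)) {w : E}
    (hw₀ : w ≠ 0) (hw₁ : ‖w‖ < 1) :
    radialHessian (fun v => a * ∑ k ∈ s, h ⟪hemisphereLift v, y k⟫) w =
      a * ∑ k ∈ s, radialSecondDeriv h (y k) w := by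
  obtain ⟨t, ht, e, he, rfl⟩ : ∃ t ∈ Set.Ioo (0 : ℝ) 1, ∃ e : E, ‖e‖ = 1 ∧ t • e = w :=
    ⟨‖w‖, ⟨norm_pos_iff.2 hw₀, hw₁⟩, _, NormedSpace.norm_normalize hw₀,
      NormedSpace.norm_smul_normalize w⟩
  have hsmooth : ContDiffAt ℝ 2 (fun v => a * ∑ k ∈ s, h ⟪hemisphereLift v, y k⟫) (t • e) :=
    contDiffAt_const.mul (ContDiffAt.sum fun k _ => hh.contDiffAt.comp _
      ((contDiffAt_hemisphereLift hw₁).inner ℝ contDiffAt_const))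
  have hfirst : (deriv fun τ : ℝ => a * ∑ k ∈ s, h ⟪hemisphereLift (τ • e), y k⟫) =ᶠ[nhds t]
      fun τ => a * ∑ k ∈ s,
        deriv h ⟪hemisphereLift (τ • e), y k⟫ * ⟪radialVelocity (τ • e), y k⟫ := by
    filter_upwards [Ioo_mem_nhds ht.1 ht.2] with τ hτ
    exact ((HasDerivAt.fun_sum fun k _ => hasDerivAt_comp_hemisphereLift_smul
      (hh.differentiable two_ne_zero) (y k) he hτ).const_mul a).deriv
  rw [radialHessian_smul_eq_deriv_deriv he ht.1.ne' hsmooth, hfirst.deriv_eq]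
  exact ((HasDerivAt.fun_sum fun k _ => hasDerivAt_deriv_comp_hemisphereLift_smul
    hh.differentiable_deriv_two (y k) he ht).const_mul a).deriv

/-! ### Lipschitz estimates on a polar cap -/

lemma norm_hemisphereLift_sub_le {c : ℝ} {w w' : E} (hc : 0 < c) (hw : c ≤ √(1 - ‖w‖ ^ 2))
    (hw' : c ≤ √(1 - ‖w'‖ ^ 2)) :
    ‖hemisphereLift w - hemisphereLift w'‖ ≤ 1 / c * ‖w - w'‖ := by
  have hsq := Real.sq_sqrt (Real.sqrt_pos.1 (hc.trans_le hw)).le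
  have hsq' := Real.sq_sqrt (Real.sqrt_pos.1 (hc.trans_le hw')).le
  have hnorm : ‖hemisphereLift w - hemisphereLift w'‖ ^ 2 =
      ‖w - w'‖ ^ 2 + (√(1 - ‖w‖ ^ 2) - √(1 - ‖w'‖ ^ 2)) ^ 2 := by
    rw [WithLp.prod_norm_sq_eq_of_L2, ← sq_abs (√(1 - ‖w‖ ^ 2) - √(1 - ‖w'‖ ^ 2))]
    rfl
  generalize √(1 - ‖w'‖ ^ 2) = s' at *
  generalize √(1 - ‖w‖ ^ 2) = s at *
  -- On the unit sphere, sum and difference of two points are orthogonal.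
  have horthogonal : (s - s') * (s + s') = -⟪w - w', w + w'⟫ := by
    rw [inner_sub_left, inner_add_right, inner_add_right, real_inner_self_eq_norm_sq,
      real_inner_self_eq_norm_sq, real_inner_comm w w']
    linarith
  have hcauchySchwarz : ((s - s') * (s + s')) ^ 2 ≤ ‖w - w'‖ ^ 2 * ‖w + w'‖ ^ 2 := by
    rw [horthogonal, neg_sq, ← sq_abs, ← mul_pow]
    gcongr
    exact abs_real_inner_le_norm _ _
  have hparallelogram : (s + s') ^ 2 + ‖w + w'‖ ^ 2 ≤ 4 := by
    nlinarith [parallelogram_law_with_norm ℝ w w', sq_nonneg (s - s'), sq_nonneg ‖w - w'‖]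
  have hheight : 4 * c ^ 2 ≤ (s + s') ^ 2 := by nlinarith
  have hscaled : (c * ‖hemisphereLift w - hemisphereLift w'‖) ^ 2 ≤ ‖w - w'‖ ^ 2 := by
    rw [mul_pow, hnorm]
    nlinarith [mul_le_mul_of_nonneg_right hheight
        (add_nonneg (sq_nonneg ‖w - w'‖) (sq_nonneg (s - s'))),
      mul_le_mul_of_nonneg_left hparallelogram (sq_nonneg ‖w - w'‖)]
  rw [one_div_mul_eq_div, le_div_iff₀' hc]
  exact le_of_sq_le_sq hscaled (norm_nonneg _)

lemma norm_radialVelocity_le {c : ℝ} {w : E} (hc : 0 < c) (hw : c ≤ √(1 - ‖w‖ ^ 2)) :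
    ‖radialVelocity w‖ ≤ 1 / c := by
  have hs := hc.trans_le hw
  have hsq := Real.sq_sqrt (Real.sqrt_pos.1 hs).le
  have hnorm : ‖radialVelocity w‖ ^ 2 ≤ (1 / √(1 - ‖w‖ ^ 2)) ^ 2 := by
    calc ‖radialVelocity w‖ ^ 2
        = ‖NormedSpace.normalize w‖ ^ 2 + (‖w‖ / √(1 - ‖w‖ ^ 2)) ^ 2 := by
          rw [WithLp.prod_norm_sq_eq_of_L2]
          simp only [radialVelocity, WithLp.toLp_fst, WithLp.toLp_snd, Real.norm_eq_abs, sq_abs,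
            neg_sq]
      _ ≤ 1 ^ 2 + (‖w‖ / √(1 - ‖w‖ ^ 2)) ^ 2 := by
          gcongr
          exact norm_normalize_le_one w
      _ = (1 / √(1 - ‖w‖ ^ 2)) ^ 2 := by
          field_simp
          linarith
  exact (le_of_sq_le_sq hnorm (by positivity)).trans (one_div_le_one_div_of_le hc hw)

lemma abs_inner_hemisphereLift_sub_le {c : ℝ} {w w' : E} (hc : 0 < c)
    (hw : c ≤ √(1 - ‖w‖ ^ 2)) (hw' : c ≤ √(1 - ‖w'‖ ^ 2)) (y : WithLp 2 (E × ℝ)) :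
    |⟪hemisphereLift w, y⟫ - ⟪hemisphereLift w', y⟫| ≤ ‖y‖ / c * ‖w - w'‖ := by
  calc |⟪hemisphereLift w, y⟫ - ⟪hemisphereLift w', y⟫|
      ≤ ‖hemisphereLift w - hemisphereLift w'‖ * ‖y‖ := by
        rw [← inner_sub_left]
        exact abs_real_inner_le_norm _ _
    _ ≤ 1 / c * ‖w - w'‖ * ‖y‖ := by
        gcongr
        exact norm_hemisphereLift_sub_le hc hw hw'
    _ = ‖y‖ / c * ‖w - w'‖ := by ring

lemma abs_inner_radialVelocity_le {c : ℝ} {w : E} (hc : 0 < c) (hw : c ≤ √(1 - ‖w‖ ^ 2))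
    (y : WithLp 2 (E × ℝ)) : |⟪radialVelocity w, y⟫| ≤ ‖y‖ / c := by
  calc |⟪radialVelocity w, y⟫| ≤ ‖radialVelocity w‖ * ‖y‖ := abs_real_inner_le_norm _ _
    _ ≤ 1 / c * ‖y‖ := by
        gcongr
        exact norm_radialVelocity_le hc hw
    _ = ‖y‖ / c := one_div_mul_eq_div c ‖y‖

lemma abs_inner_radialVelocity_sub_le {c r : ℝ} {w w' : E} (hc : 0 < c) (hr : 0 < r)
    (hrw : r ≤ ‖w‖) (hw : c ≤ √(1 - ‖w‖ ^ 2)) (hw' : c ≤ √(1 - ‖w'‖ ^ 2))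
    (y : WithLp 2 (E × ℝ)) :
    |⟪radialVelocity w, y⟫ - ⟪radialVelocity w', y⟫| ≤
      (2 * ‖y‖ / r + |y.snd| / c ^ 3) * ‖w - w'‖ := by
  have hdirection : ‖NormedSpace.normalize w - NormedSpace.normalize w'‖ ≤ 2 * ‖w - w'‖ / r := by
    rw [le_div_iff₀' hr]
    exact le_trans (by gcongr) (norm_mul_norm_normalize_sub_normalize_le w w')
  have hslope : |‖w'‖ / √(1 - ‖w'‖ ^ 2) - ‖w‖ / √(1 - ‖w‖ ^ 2)| ≤ 1 / c ^ 3 * ‖w - w'‖ := by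
    refine (abs_div_sqrt_one_sub_sq_sub_le hc hw' hw).trans ?_
    rw [norm_sub_rev]
    gcongr
    exact abs_norm_sub_norm_le w' w
  calc |⟪radialVelocity w, y⟫ - ⟪radialVelocity w', y⟫|
      = |⟪NormedSpace.normalize w - NormedSpace.normalize w', y.fst⟫ +
          (‖w'‖ / √(1 - ‖w'‖ ^ 2) - ‖w‖ / √(1 - ‖w‖ ^ 2)) * y.snd| := by
        simp only [radialVelocity, WithLp.prod_inner_apply, WithLp.ofLp_fst, WithLp.ofLp_snd,
          Real.inner_apply, inner_sub_left]
        ring_nf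
    _ ≤ ‖NormedSpace.normalize w - NormedSpace.normalize w'‖ * ‖y.fst‖ +
          |‖w'‖ / √(1 - ‖w'‖ ^ 2) - ‖w‖ / √(1 - ‖w‖ ^ 2)| * |y.snd| := by
        refine (abs_add_le _ _).trans ?_
        rw [abs_mul]
        gcongr
        exact abs_real_inner_le_norm _ _
    _ ≤ 2 * ‖w - w'‖ / r * ‖y‖ + 1 / c ^ 3 * ‖w - w'‖ * |y.snd| := by
        gcongr
        exact WithLp.norm_fst_le _ y
    _ = (2 * ‖y‖ / r + |y.snd| / c ^ 3) * ‖w - w'‖ := by ring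

lemma inner_radialAcceleration (w : E) (y : WithLp 2 (E × ℝ)) :
    ⟪radialAcceleration w, y⟫ = -(1 / √(1 - ‖w‖ ^ 2) ^ 3 * y.snd) := by
  simp only [radialAcceleration, WithLp.prod_inner_apply, inner_zero_left, zero_add,
    WithLp.ofLp_snd, Real.inner_apply, neg_mul]

lemma abs_inner_radialAcceleration_le {c : ℝ} {w : E} (hc : 0 < c) (hw : c ≤ √(1 - ‖w‖ ^ 2))
    (y : WithLp 2 (E × ℝ)) : |⟪radialAcceleration w, y⟫| ≤ |y.snd| / c ^ 3 := by
  rw [inner_radialAcceleration, abs_neg, abs_mul, abs_of_nonneg (by positivity),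
    one_div_mul_eq_div]
  gcongr

lemma abs_inner_radialAcceleration_sub_le {c : ℝ} {w w' : E} (hc : 0 < c)
    (hw : c ≤ √(1 - ‖w‖ ^ 2)) (hw' : c ≤ √(1 - ‖w'‖ ^ 2)) (y : WithLp 2 (E × ℝ)) :
    |⟪radialAcceleration w, y⟫ - ⟪radialAcceleration w', y⟫| ≤
      3 * |y.snd| / c ^ 5 * ‖w - w'‖ := by
  calc |⟪radialAcceleration w, y⟫ - ⟪radialAcceleration w', y⟫|
      = |1 / √(1 - ‖w'‖ ^ 2) ^ 3 - 1 / √(1 - ‖w‖ ^ 2) ^ 3| * |y.snd| := by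
        rw [inner_radialAcceleration, inner_radialAcceleration, ← abs_mul]
        ring_nf
    _ ≤ 3 / c ^ 5 * |‖w'‖ - ‖w‖| * |y.snd| := by
        gcongr
        exact abs_one_div_sqrt_one_sub_sq_cube_sub_le hc hw' hw
    _ ≤ 3 / c ^ 5 * ‖w - w'‖ * |y.snd| := by
        rw [norm_sub_rev]
        gcongr
        exact abs_norm_sub_norm_le w' w
    _ = 3 * |y.snd| / c ^ 5 * ‖w - w'‖ := by ring

lemma abs_deriv_deriv_mul_inner_radialVelocity_sq_sub_le {h : ℝ → ℝ} {A₁ A₂ A₃ c r : ℝ}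
    (hh : IsRegularLoss h A₁ A₂ A₃) {w w' : E} (hc : 0 < c) (hr : 0 < r) (hrw : r ≤ ‖w‖)
    (hw : c ≤ √(1 - ‖w‖ ^ 2)) (hw' : c ≤ √(1 - ‖w'‖ ^ 2)) (y : WithLp 2 (E × ℝ)) :
    |deriv (deriv h) ⟪hemisphereLift w, y⟫ * ⟪radialVelocity w, y⟫ ^ 2 -
        deriv (deriv h) ⟪hemisphereLift w', y⟫ * ⟪radialVelocity w', y⟫ ^ 2| ≤
      (A₃ * (‖y‖ / c) ^ 3 + 2 * A₂ * (‖y‖ / c) * (2 * ‖y‖ / r + |y.snd| / c ^ 3)) *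
        ‖w - w'‖ := by
  have hA₂ : 0 ≤ A₂ := (abs_nonneg _).trans (hh.abs_deriv_deriv_le 0)
  have hA₃ : 0 ≤ A₃ := by
    simpa using (abs_nonneg _).trans (hh.abs_deriv_deriv_sub_le 1 0)
  have hcurvature : |deriv (deriv h) ⟪hemisphereLift w, y⟫ -
      deriv (deriv h) ⟪hemisphereLift w', y⟫| ≤ A₃ * (‖y‖ / c * ‖w - w'‖) :=
    (hh.abs_deriv_deriv_sub_le _ _).trans <| by
      gcongr
      exact abs_inner_hemisphereLift_sub_le hc hw hw' y
  have hvelocity := abs_inner_radialVelocity_le hc hw y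
  have hsquare : |⟪radialVelocity w, y⟫ ^ 2 - ⟪radialVelocity w', y⟫ ^ 2| ≤
      (‖y‖ / c + ‖y‖ / c) * ((2 * ‖y‖ / r + |y.snd| / c ^ 3) * ‖w - w'‖) := by
    rw [sq_sub_sq, abs_mul]
    gcongr
    · exact (abs_add_le _ _).trans (add_le_add hvelocity (abs_inner_radialVelocity_le hc hw' y))
    · exact abs_inner_radialVelocity_sub_le hc hr hrw hw hw' y
  calc _ ≤ A₃ * (‖y‖ / c * ‖w - w'‖) * (‖y‖ / c) ^ 2 +
        A₂ * ((‖y‖ / c + ‖y‖ / c) * ((2 * ‖y‖ / r + |y.snd| / c ^ 3) * ‖w - w'‖)) := by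
        refine (abs_mul_sub_mul_le _ _ _ _).trans ?_
        rw [abs_pow]
        gcongr
        exact hh.abs_deriv_deriv_le _
    _ = _ := by ring

lemma abs_deriv_mul_inner_radialAcceleration_sub_le {h : ℝ → ℝ} {A₁ A₂ A₃ c : ℝ}
    (hh : IsRegularLoss h A₁ A₂ A₃) {w w' : E} (hc : 0 < c)
    (hw : c ≤ √(1 - ‖w‖ ^ 2)) (hw' : c ≤ √(1 - ‖w'‖ ^ 2)) (y : WithLp 2 (E × ℝ)) :
    |deriv h ⟪hemisphereLift w, y⟫ * ⟪radialAcceleration w, y⟫ -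
        deriv h ⟪hemisphereLift w', y⟫ * ⟪radialAcceleration w', y⟫| ≤
      (A₂ * (‖y‖ / c) * (|y.snd| / c ^ 3) + A₁ * (3 * |y.snd| / c ^ 5)) * ‖w - w'‖ := by
  have hA₁ : 0 ≤ A₁ := (abs_nonneg _).trans (hh.abs_deriv_le 0)
  have hA₂ : 0 ≤ A₂ := (abs_nonneg _).trans (hh.abs_deriv_deriv_le 0)
  have hslope : |deriv h ⟪hemisphereLift w, y⟫ - deriv h ⟪hemisphereLift w', y⟫| ≤
      A₂ * (‖y‖ / c * ‖w - w'‖) :=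
    (hh.abs_deriv_sub_le _ _).trans <| by
      gcongr
      exact abs_inner_hemisphereLift_sub_le hc hw hw' y
  calc _ ≤ A₂ * (‖y‖ / c * ‖w - w'‖) * (|y.snd| / c ^ 3) +
        A₁ * (3 * |y.snd| / c ^ 5 * ‖w - w'‖) := by
        refine (abs_mul_sub_mul_le _ _ _ _).trans ?_
        gcongr
        exacts [abs_inner_radialAcceleration_le hc hw y, hh.abs_deriv_le _,
          abs_inner_radialAcceleration_sub_le hc hw hw' y]
    _ = _ := by ring

lemma abs_radialSecondDeriv_sub_le {h : ℝ → ℝ} {A₁ A₂ A₃ c r : ℝ}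
    (hh : IsRegularLoss h A₁ A₂ A₃) {w w' : E} (hc : 0 < c) (hr : 0 < r) (hrw : r ≤ ‖w‖)
    (hw : c ≤ √(1 - ‖w‖ ^ 2)) (hw' : c ≤ √(1 - ‖w'‖ ^ 2)) (y : WithLp 2 (E × ℝ)) :
    |radialSecondDeriv h y w - radialSecondDeriv h y w'| ≤
      (A₃ * (‖y‖ / c) ^ 3 + 2 * A₂ * (‖y‖ / c) * (2 * ‖y‖ / r + |y.snd| / c ^ 3) +
        A₂ * (‖y‖ / c) * (|y.snd| / c ^ 3) + A₁ * (3 * |y.snd| / c ^ 5)) * ‖w - w'‖ := by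
  rw [radialSecondDeriv, radialSecondDeriv, add_sub_add_comm]
  refine (abs_add_le _ _).trans ((add_le_add
    (abs_deriv_deriv_mul_inner_radialVelocity_sq_sub_le hh hc hr hrw hw hw' y)
    (abs_deriv_mul_inner_radialAcceleration_sub_le hh hc hw hw' y)).trans_eq ?_)
  ring

end Hemisphere

/-! ### Data matrices -/

lemma abs_le_Minf {m k : ℕ} (M : Matrix (Fin m) (Fin k) ℝ) (i : Fin m) (j : Fin k) :
    |M i j| ≤ Minf M :=
  (le_ciSup (Set.finite_range fun j => |M i j|).bddAbove j).trans
    (le_ciSup (Set.finite_range fun i => ⨆ j, |M i j|).bddAbove i)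

lemma Minf_nonneg {m k : ℕ} (M : Matrix (Fin m) (Fin k) ℝ) : 0 ≤ Minf M :=
  Real.iSup_nonneg fun _ => Real.iSup_nonneg fun _ => abs_nonneg _

lemma one_div_two_mul_sqrt_le_of_mem_GammaSet {n : ℕ} {w : EuclideanSpace ℝ (Fin (n - 1))}
    (hw : w ∈ GammaSet n) : 1 / (2 * √n) ≤ √(1 - ‖w‖ ^ 2) := by
  rcases n.eq_zero_or_pos with rfl | hn
  · simp
  have hn' : (0 : ℝ) < n := Nat.cast_pos.2 hn
  apply Real.le_sqrt_of_sq_le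
  have hnorm : ‖w‖ ^ 2 < (4 * n - 1) / (4 * n) := (Real.lt_sqrt (norm_nonneg w)).1 hw
  calc (1 / (2 * √n)) ^ 2 = 1 - (4 * n - 1) / (4 * n) := by
        rw [div_pow, mul_pow, Real.sq_sqrt hn'.le]
        field_simp
        ring
    _ ≤ 1 - ‖w‖ ^ 2 := by linarith

lemma norm_lt_one_of_mem_GammaSet {n : ℕ} {w : EuclideanSpace ℝ (Fin (n - 1))}
    (hw : w ∈ GammaSet n) : ‖w‖ < 1 := by
  refine lt_of_lt_of_le hw (Real.sqrt_le_one.2 (div_le_one_of_le₀ ?_ (by positivity)))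
  linarith

/-- The `k`-th column of `Y`, split into its first `m` entries and its last one; this is the
splitting of `ℝ^{m+1}` used by `qmap`. -/
def sampleColumn {m p : ℕ} (Y : Matrix (Fin (m + 1)) (Fin p) ℝ) (k : Fin p) :
    WithLp 2 (EuclideanSpace ℝ (Fin m) × ℝ) :=
  WithLp.toLp 2 (WithLp.toLp 2 fun i => Y i.castSucc k, Y (Fin.last m) k)

lemma gfun_succ_eq (m p : ℕ) (μ : ℝ) (Y : Matrix (Fin (m + 1)) (Fin p) ℝ) :
    gfun (m + 1) p μ Y = fun w : EuclideanSpace ℝ (Fin m) =>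
      (p : ℝ)⁻¹ * ∑ k, hmu μ ⟪hemisphereLift w, sampleColumn Y k⟫ := by
  funext w
  have hinner (k : Fin p) :
      ∑ i, qmap (m + 1) w i * Y i k = ⟪hemisphereLift w, sampleColumn Y k⟫ := by
    rw [Fin.sum_univ_castSucc]
    simp [qmap, hemisphereLift, sampleColumn, WithLp.prod_inner_apply, PiLp.inner_apply, mul_comm]
  simp only [gfun, hinner]

lemma norm_sampleColumn_le {m p : ℕ} (Y : Matrix (Fin (m + 1)) (Fin p) ℝ) (k : Fin p) :
    ‖sampleColumn Y k‖ ≤ √((m + 1 : ℕ) : ℝ) * Minf Y := by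
  refine le_of_sq_le_sq ?_ (mul_nonneg (Real.sqrt_nonneg _) (Minf_nonneg Y))
  calc ‖sampleColumn Y k‖ ^ 2 = ∑ i, Y i k ^ 2 := by
        rw [WithLp.prod_norm_sq_eq_of_L2, Fin.sum_univ_castSucc]
        simp [sampleColumn, EuclideanSpace.norm_sq_eq]
    _ ≤ ∑ _i : Fin (m + 1), Minf Y ^ 2 := by
        refine Finset.sum_le_sum fun i _ => ?_
        exact sq_le_sq' (neg_le_of_abs_le (abs_le_Minf Y i k)) (le_of_abs_le (abs_le_Minf Y i k))
    _ = (√((m + 1 : ℕ) : ℝ) * Minf Y) ^ 2 := by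
        rw [mul_pow, Real.sq_sqrt (Nat.cast_nonneg _), Fin.sum_const, nsmul_eq_mul]

lemma abs_radialSecondDeriv_sampleColumn_sub_le {m p : ℕ} {μ r : ℝ} (hμ : 0 < μ) (hr : 0 < r)
    (Y : Matrix (Fin (m + 1)) (Fin p) ℝ) (k : Fin p) {w w' : EuclideanSpace ℝ (Fin m)}
    (hw : w ∈ GammaSet (m + 1)) (hw' : w' ∈ GammaSet (m + 1)) (hrw : r ≤ ‖w‖) :
    |radialSecondDeriv (hmu μ) (sampleColumn Y k) w -
        radialSecondDeriv (hmu μ) (sampleColumn Y k) w'| ≤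
      (16 * ((m + 1 : ℕ) : ℝ) ^ 3 / μ ^ 2 * Minf Y ^ 3 +
       8 * ((m + 1 : ℕ) : ℝ) ^ ((3 : ℝ) / 2) / (μ * r) * Minf Y ^ 2 +
       48 * ((m + 1 : ℕ) : ℝ) ^ ((5 : ℝ) / 2) / μ * Minf Y ^ 2 +
       96 * ((m + 1 : ℕ) : ℝ) ^ ((5 : ℝ) / 2) * Minf Y) * ‖w - w'‖ := by
  have hnorm := norm_sampleColumn_le Y k
  have hlast : |(sampleColumn Y k).snd| ≤ Minf Y := abs_le_Minf Y (Fin.last m) k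
  have hcap := one_div_two_mul_sqrt_le_of_mem_GammaSet hw
  have hcap' := one_div_two_mul_sqrt_le_of_mem_GammaSet hw'
  rw [Real.rpow_div_two_eq_sqrt _ (Nat.cast_nonneg _), Real.rpow_div_two_eq_sqrt _
    (Nat.cast_nonneg _), Real.rpow_ofNat, Real.rpow_ofNat]
  have hN : (0 : ℝ) < (m + 1 : ℕ) := Nat.cast_pos.2 m.succ_pos
  have hB := Minf_nonneg Y
  nth_rw 1 [← Real.sq_sqrt hN.le]
  have hsqrt := Real.sqrt_pos.2 hN
  generalize √((m + 1 : ℕ) : ℝ) = s at *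
  refine (abs_radialSecondDeriv_sub_le (isRegularLoss_hmu hμ) (by positivity) hr hrw hcap hcap'
    (sampleColumn Y k)).trans ?_
  gcongr ?_ * _
  calc _ ≤ 2 / μ ^ 2 * (s * Minf Y / (1 / (2 * s))) ^ 3 +
        2 * (1 / μ) * (s * Minf Y / (1 / (2 * s))) *
          (2 * (s * Minf Y) / r + Minf Y / (1 / (2 * s)) ^ 3) +
        1 / μ * (s * Minf Y / (1 / (2 * s))) * (Minf Y / (1 / (2 * s)) ^ 3) +
        1 * (3 * Minf Y / (1 / (2 * s)) ^ 5) := by gcongr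
    _ = _ := by
        field_simp
        ring

/-- Proposition: Lipschitz property of the Hessian quadratic form. -/
theorem statement10 (n p : ℕ) (μ r : ℝ) (hμ : 0 < μ) (hr : r ∈ Set.Ioo (0 : ℝ) 1)
    (X₀ : Matrix (Fin n) (Fin p) ℝ) :
    ∀ w ∈ GammaSet n ∩ {w | r ≤ ‖w‖}, ∀ w' ∈ GammaSet n ∩ {w | r ≤ ‖w‖},
      |⟪hessg n p μ X₀ w w, w⟫ / ‖w‖ ^ 2 - ⟪hessg n p μ X₀ w' w', w'⟫ / ‖w'‖ ^ 2| ≤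
        (16 * (n : ℝ) ^ 3 / μ ^ 2 * Minf X₀ ^ 3 +
         8 * (n : ℝ) ^ ((3 : ℝ) / 2) / (μ * r) * Minf X₀ ^ 2 +
         48 * (n : ℝ) ^ ((5 : ℝ) / 2) / μ * Minf X₀ ^ 2 +
         96 * (n : ℝ) ^ ((5 : ℝ) / 2) * Minf X₀) * ‖w - w'‖ := by
  rintro w ⟨hw, hrw⟩ w' ⟨hw', hrw'⟩
  have hr₀ : 0 < r := hr.1
  obtain _ | m := n
  · exact absurd hw (by simp [GammaSet])
  have hradial (v : EuclideanSpace ℝ (Fin m)) (hv : v ∈ GammaSet (m + 1)) (hrv : r ≤ ‖v‖) :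
      ⟪hessg (m + 1) p μ X₀ v v, v⟫ / ‖v‖ ^ 2 =
        (p : ℝ)⁻¹ * ∑ k, radialSecondDeriv (hmu μ) (sampleColumn X₀ k) v := by
    change radialHessian (gfun (m + 1) p μ X₀) v = _
    rw [gfun_succ_eq]
    exact radialHessian_mul_sum_comp_hemisphereLift (contDiff_hmu μ) _ _ _
      (norm_pos_iff.1 (hr₀.trans_le hrv)) (norm_lt_one_of_mem_GammaSet hv)
  refine (congrArg abs (congrArg₂ (· - ·) (hradial w hw hrw) (hradial w' hw' hrw'))).trans_le ?_
  rw [← mul_sub, ← Finset.sum_sub_distrib]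
  have hcolumn := fun k (_ : k ∈ Finset.univ) =>
    abs_radialSecondDeriv_sampleColumn_sub_le hμ hr₀ X₀ k hw hw' hrw
  have hB := Minf_nonneg X₀
  simpa only [Finset.card_univ, Fintype.card_fin] using
    abs_inv_card_mul_sum_le Finset.univ (by positivity) hcolumn

end
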